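/- Assume 0 ≤ h < H and M ∈ [h|Ω|, H|Ω|]. Set Θ := Θ(h,H,M), α := (H−h)·Θ and A := (H|Ω| − M)/(H−h), and suppose A < |Ω|. Then 0 < α ≤ ᾱ(A), where ᾱ(A) is the unique positive real number satisfying Λ(ᾱ(A), A) = ᾱ(A); moreover α = ᾱ(A) if and only if h = 0. -/

import Mathlib

open MeasureTheory ENNReal

noncomputable section

/-- The Euclidean Laplacian `Δu` of a function `u : ℝⁿ → ℝ`. -/
def lap {n : ℕ} (u : EuclideanSpace ℝ (Fin n) → ℝ) (x : EuclideanSpace ℝ (Fin n)) : ℝ :=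
  ∑ i : Fin n, iteratedFDeriv ℝ 2 u x ![EuclideanSpace.single i 1, EuclideanSpace.single i 1]

/-- Smooth compactly supported test functions on `Ω`, not identically zero. -/
def TestFun {n : ℕ} (Ω : Set (EuclideanSpace ℝ (Fin n)))
    (u : EuclideanSpace ℝ (Fin n) → ℝ) : Prop :=
  ContDiff ℝ (⊤ : ℕ∞) u ∧ HasCompactSupport u ∧ tsupport u ⊆ Ω ∧ u ≠ 0

/-- The generalized composite plate eigenvalue
`Λ(α,A) = inf_S inf_u (∫_Ω (Δu)² + α ∫_S u²) / ∫_Ω u²`,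
the infima being over measurable `S ⊆ Ω` with `|S| = A` and over smooth compactly
supported `u : Ω → ℝ`, `u ≢ 0`. -/
def Lam {n : ℕ} (Ω : Set (EuclideanSpace ℝ (Fin n))) (α A : ℝ) : ℝ :=
  sInf { r : ℝ | ∃ S : Set (EuclideanSpace ℝ (Fin n)), MeasurableSet S ∧ S ⊆ Ω ∧
      volume S = ENNReal.ofReal A ∧
      ∃ u : EuclideanSpace ℝ (Fin n) → ℝ, TestFun Ω u ∧
        r = ((∫ x in Ω, lap u x ^ 2) + α * ∫ x in S, u x ^ 2) / ∫ x in Ω, u x ^ 2 }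

/-- The class `P` of admissible densities on `Ω`:
`h ≤ ρ ≤ H` a.e. in `Ω`, `ρ > 0` a.e. in `Ω`, and `∫_Ω ρ = M`. -/
def Admissible {n : ℕ} (Ω : Set (EuclideanSpace ℝ (Fin n))) (h H M : ℝ)
    (ρ : EuclideanSpace ℝ (Fin n) → ℝ) : Prop :=
  Measurable ρ ∧ (∀ᵐ x ∂volume.restrict Ω, h ≤ ρ x ∧ ρ x ≤ H ∧ 0 < ρ x) ∧
    (∫ x in Ω, ρ x) = M

/-- The composite plate eigenvalue
`Θ(h,H,M) = inf_{ρ ∈ P} inf_u ∫_Ω (Δu)² / ∫_Ω ρ u²`,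
the inner infimum being over smooth compactly supported `u : Ω → ℝ`, `u ≢ 0`. -/
def Theta {n : ℕ} (Ω : Set (EuclideanSpace ℝ (Fin n))) (h H M : ℝ) : ℝ :=
  sInf { r : ℝ | ∃ ρ : EuclideanSpace ℝ (Fin n) → ℝ, Admissible Ω h H M ρ ∧
      ∃ u : EuclideanSpace ℝ (Fin n) → ℝ, TestFun Ω u ∧
        r = (∫ x in Ω, lap u x ^ 2) / ∫ x in Ω, ρ x * u x ^ 2 }


lemma int_cs {n : ℕ} {f : EuclideanSpace ℝ (Fin n) → ℝ} (hc : Continuous f)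
    (hs : HasCompactSupport f) : Integrable f := hc.integrable_of_hasCompactSupport hs

lemma lap_eq {n : ℕ} (u : EuclideanSpace ℝ (Fin n) → ℝ) (hu : ContDiff ℝ (⊤ : ℕ∞) u)
    (x : EuclideanSpace ℝ (Fin n)) :
    lap u x = ∑ i : Fin n, fderiv ℝ (fun y => fderiv ℝ u y (EuclideanSpace.single i 1)) x
      (EuclideanSpace.single i 1) := by
  unfold lap
  refine Finset.sum_congr rfl fun i _ => ?_
  rw [iteratedFDeriv_two_apply]
  have hd : DifferentiableAt ℝ (fderiv ℝ u) x :=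
    ((hu.fderiv_right (m := 1) (by norm_cast)).differentiable (by norm_num)) x
  rw [fderiv_clm_apply hd (by fun_prop)]
  simp

lemma poincare {n : ℕ} (hn : 2 ≤ n) (Ω : Set (EuclideanSpace ℝ (Fin n)))
    (R : ℝ) (hR : 0 < R) (hΩ : ∀ x ∈ Ω, ‖x‖ ≤ R) (u : EuclideanSpace ℝ (Fin n) → ℝ)
    (hu : TestFun Ω u) :
    (∫ x, u x ^ 2) ≤ 16 * R ^ 4 * ∫ x, lap u x ^ 2 := by
  obtain ⟨hsm, hcs, hsup, -⟩ := hu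
  let e : Fin n → EuclideanSpace ℝ (Fin n) := fun i => EuclideanSpace.single i 1
  let d : Fin n → EuclideanSpace ℝ (Fin n) → ℝ := fun i x => fderiv ℝ u x (e i)
  have hdsm : ∀ i, ContDiff ℝ (⊤ : ℕ∞) (d i) := fun i =>
    (hsm.fderiv_right (m := (⊤ : ℕ∞)) (by norm_cast)).clm_apply contDiff_const
  have hdcs : ∀ i, HasCompactSupport (d i) := fun i => hcs.fderiv_apply (𝕜 := ℝ) (e i)
  have hddsm : ∀ i, ContDiff ℝ (⊤ : ℕ∞) (fun x => fderiv ℝ (d i) x (e i)) := fun i =>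
    ((hdsm i).fderiv_right (m := (⊤ : ℕ∞)) (by norm_cast)).clm_apply contDiff_const
  have hddcs : ∀ i, HasCompactSupport (fun x => fderiv ℝ (d i) x (e i)) := fun i =>
    (hdcs i).fderiv_apply (𝕜 := ℝ) (e i)
  have hlap : lap u = fun x => ∑ i, fderiv ℝ (d i) x (e i) := by
    funext x; exact lap_eq u hsm x
  have huc := hsm.continuous
  have hlc : Continuous (lap u) := by
    rw [hlap]; exact continuous_finsetSum _ fun i _ => (hddsm i).continuous
  have hlint : Integrable (fun x => lap u x ^ 2) := by
    refine int_cs (by fun_prop) ?_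
    have : HasCompactSupport (lap u) := by
      apply hcs.mono'
      intro x hx
      by_contra hxt
      apply hx
      have : u =ᶠ[nhds x] 0 := notMem_tsupport_iff_eventuallyEq.mp hxt
      unfold lap
      have h2 := (this.iteratedFDeriv ℝ 2).eq_of_nhds
      rw [h2]
      have : (iteratedFDeriv ℝ 2 (0 : EuclideanSpace ℝ (Fin n) → ℝ) x) = 0 := by
        simp
      simp [this]
    exact this.comp_left (g := fun y : ℝ => y ^ 2) (by norm_num)
  have huint : Integrable (fun x => u x ^ 2) :=
    int_cs (by fun_prop) (hcs.comp_left (g := fun y : ℝ => y ^ 2) (by norm_num))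
  have hdint : ∀ i, Integrable (fun x => d i x ^ 2) := fun i =>
    int_cs ((hdsm i).continuous.pow 2) ((hdcs i).comp_left (g := fun y : ℝ => y ^ 2) (by norm_num))
  have hudd : ∀ i, Integrable (fun x => u x * fderiv ℝ (d i) x (e i)) := fun i =>
    int_cs (huc.mul (hddsm i).continuous) (hcs.mul_right)
  -- step 1
  have h1 : ∀ i, ∫ x, u x * fderiv ℝ (d i) x (e i) = - ∫ x, d i x ^ 2 := by
    intro i
    rw [integral_mul_fderiv_eq_neg_fderiv_mul_of_integrable]
    · congr 1; congr 1; funext x; show d i x * d i x = _; ring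
    · have := hdint i
      refine this.congr (Filter.Eventually.of_forall fun x => ?_)
      show d i x ^ 2 = d i x * d i x
      ring
    · exact hudd i
    · exact int_cs (huc.mul (hdsm i).continuous) (hcs.mul_right)
    · intro x _; exact hsm.differentiable (by norm_num) x
    · intro x _; exact (hdsm i).differentiable (by norm_num) x
  have h2 : ∑ i, ∫ x, d i x ^ 2 = - ∫ x, u x * lap u x := by
    have : ∫ x, u x * lap u x = ∑ i, ∫ x, u x * fderiv ℝ (d i) x (e i) := by
      rw [← integral_finsetSum _ (fun i _ => hudd i)]
      congr 1; funext x; rw [hlap, Finset.mul_sum]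
    rw [this, Finset.sum_congr rfl (fun i _ => h1 i)]
    simp
  let i0 : Fin n := ⟨0, by omega⟩
  have h3 : ∫ x, d i0 x ^ 2 ≤ - ∫ x, u x * lap u x := by
    rw [← h2]
    exact Finset.single_le_sum (f := fun i => ∫ x, d i x ^ 2)
      (fun i _ => integral_nonneg fun x => sq_nonneg _) (Finset.mem_univ i0)
  have hul : Integrable (fun x => u x * lap u x) := int_cs (huc.mul hlc) hcs.mul_right
  have h4 : - ∫ x, u x * lap u x ≤
      (1 / (8 * R ^ 2)) * (∫ x, u x ^ 2) + 2 * R ^ 2 * ∫ x, lap u x ^ 2 := by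
    rw [← integral_neg, ← integral_const_mul, ← integral_const_mul, ← integral_add
      (huint.const_mul _) (hlint.const_mul _)]
    refine integral_mono hul.neg ((huint.const_mul _).add (hlint.const_mul _)) fun x => ?_
    have : 0 ≤ (1 / (8 * R ^ 2)) * (u x + 4 * R ^ 2 * lap u x) ^ 2 := by positivity
    have e2 : (1 / (8 * R ^ 2)) * (u x + 4 * R ^ 2 * lap u x) ^ 2 =
      (1 / (8 * R ^ 2)) * u x ^ 2 + u x * lap u x + 2 * R ^ 2 * lap u x ^ 2 := by
      field_simp; ring
    simp only []
    linarith
  -- step 2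
  have hx0 : ∀ x : EuclideanSpace ℝ (Fin n), HasFDerivAt (fun y : EuclideanSpace ℝ (Fin n) => y i0)
      (EuclideanSpace.proj i0 : EuclideanSpace ℝ (Fin n) →L[ℝ] ℝ) x := fun x =>
    (EuclideanSpace.proj i0 : EuclideanSpace ℝ (Fin n) →L[ℝ] ℝ).hasFDerivAt
  have hx0c : Continuous (fun y : EuclideanSpace ℝ (Fin n) => y i0) := by fun_prop
  have hsqd : ∀ x, fderiv ℝ (fun y => u y ^ 2) x (e i0) = 2 * u x * d i0 x := by
    intro x
    have := ((hsm.differentiable (by norm_num) x).hasFDerivAt.pow 2).fderiv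
    rw [this]; simp [d]
  have h5 : ∫ x : EuclideanSpace ℝ (Fin n), x i0 * (2 * u x * d i0 x) = - ∫ x, u x ^ 2 := by
    have key := integral_mul_fderiv_eq_neg_fderiv_mul_of_integrable (μ := volume)
      (f := fun y : EuclideanSpace ℝ (Fin n) => y i0) (g := fun y => u y ^ 2) (v := e i0)
      ?_ ?_ ?_ ?_ ?_
    · simp only [hsqd] at key
      rw [key]
      congr 1; congr 1; funext x
      rw [(hx0 x).fderiv]; simp [e]
    · refine huint.congr (Filter.Eventually.of_forall fun x => ?_)
      simp only [(hx0 x).fderiv]; simp [e]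
    · simp only [hsqd]
      refine int_cs (hx0c.mul ((continuous_const.mul huc).mul (hdsm i0).continuous)) ?_
      exact ((hdcs i0).mul_left).mul_left
    · exact int_cs (by fun_prop)
        (hcs.comp_left (g := fun y : ℝ => y ^ 2) (by norm_num)).mul_left
    · intro x _; exact (hx0 x).differentiableAt
    · intro x _; exact (hsm.differentiable (by norm_num) x).pow 2
  have h6 : ∫ x, u x ^ 2 ≤ (1/2) * (∫ x, u x ^ 2) + 2 * R ^ 2 * ∫ x, d i0 x ^ 2 := by
    rw [← integral_const_mul, ← integral_const_mul, ← integral_add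
      (huint.const_mul _) ((hdint i0).const_mul _)]
    have h5' : ∫ x, u x ^ 2 = ∫ x : EuclideanSpace ℝ (Fin n), - (x i0 * (2 * u x * d i0 x)) := by
      rw [integral_neg, h5]; simp
    rw [h5']
    refine integral_mono ?_ ((huint.const_mul _).add ((hdint i0).const_mul _)) fun x => ?_
    · refine Integrable.neg ?_
      refine int_cs (hx0c.mul ((continuous_const.mul huc).mul (hdsm i0).continuous)) ?_
      exact ((hdcs i0).mul_left).mul_left
    · show -(x i0 * (2 * u x * d i0 x)) ≤ (1/2) * u x ^ 2 + 2 * R ^ 2 * d i0 x ^ 2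
      by_cases hx : x ∈ tsupport u
      · have hxR := hΩ x (hsup hx)
        have hxi : |x i0| ≤ R := (by simpa using PiLp.norm_apply_le x i0 : |x i0| ≤ ‖x‖).trans hxR
        have hsq : x i0 ^ 2 ≤ R ^ 2 := sq_le_sq' (by linarith [(abs_le.mp hxi).1]) (abs_le.mp hxi).2
        have := mul_le_mul_of_nonneg_right hsq (sq_nonneg (d i0 x))
        nlinarith [sq_nonneg (u x + 2 * (x i0 * d i0 x))]
      · have : u x = 0 := image_eq_zero_of_notMem_tsupport hx
        rw [this]; 
        have : 0 ≤ 2 * R ^ 2 * d i0 x ^ 2 := by positivity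
        simpa using this
  have h7 := h3.trans h4
  have h8 : 2 * R ^ 2 * ∫ x, d i0 x ^ 2 ≤ 2 * R ^ 2 * ((1 / (8 * R ^ 2)) * (∫ x, u x ^ 2) + 2 * R ^ 2 * ∫ x, lap u x ^ 2) :=
    mul_le_mul_of_nonneg_left h7 (by positivity)
  have h9 : 2 * R ^ 2 * ((1 / (8 * R ^ 2)) * (∫ x, u x ^ 2) + 2 * R ^ 2 * ∫ x, lap u x ^ 2) =
    (1/4) * (∫ x, u x ^ 2) + 4 * R ^ 4 * ∫ x, lap u x ^ 2 := by field_simp; ring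
  linarith

lemma level_set {X : Type*} [MeasurableSpace X] (μ : Measure X) [IsFiniteMeasure μ]
    (f : X → ℝ) (hf : Measurable f) (h0 : ∀ x, 0 ≤ f x) (C : ℝ) (hC : ∀ x, f x ≤ C)
    (m : ℝ≥0∞) (hm : m ≤ μ Set.univ) :
    ∃ t : ℝ, μ {x | t < f x} ≤ m ∧ m ≤ μ {x | t ≤ f x} := by
  rcases hm.eq_or_lt with hm | hm
  · refine ⟨0, hm ▸ measure_mono (Set.subset_univ _), ?_⟩
    rw [hm]; apply measure_mono; intro x _; exact h0 x
  let G : Set ℝ := {t | μ {x | t < f x} ≤ m}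
  have hGne : G.Nonempty := ⟨C, by
    have : {x | C < f x} = ∅ := by ext x; simpa using hC x
    show μ {x | C < f x} ≤ m
    rw [this]; simp⟩
  have hGb : BddBelow G := ⟨0, by
    intro t ht
    by_contra hlt
    push Not at hlt
    have : {x | t < f x} = Set.univ := by ext x; simpa using hlt.trans_le (h0 x)
    have ht' : μ {x | t < f x} ≤ m := ht
    rw [this] at ht'
    exact absurd ht' (not_le.mpr hm)⟩
  have hup : ∀ s, sInf G < s → μ {x | s < f x} ≤ m := by
    intro s hs
    obtain ⟨t, ht, hts⟩ := exists_lt_of_csInf_lt hGne hs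
    exact (measure_mono fun x (hx : s < f x) => hts.trans hx).trans ht
  have hdn : ∀ s, s < sInf G → m ≤ μ {x | s < f x} := by
    intro s hs
    by_contra hlt
    exact absurd (csInf_le hGb (show s ∈ G from (not_le.mp hlt).le)) (not_le.mpr hs)
  refine ⟨sInf G, ?_, ?_⟩
  · have hU : {x | sInf G < f x} = ⋃ k : ℕ, {x | sInf G + 1 / ((k : ℝ) + 1) < f x} := by
      ext x
      simp only [Set.mem_ofPred_eq, Set.mem_iUnion]
      constructor
      · intro hx
        obtain ⟨k, hk⟩ := exists_nat_one_div_lt (sub_pos.mpr hx)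
        exact ⟨k, by linarith⟩
      · rintro ⟨k, hk⟩
        have : 0 < 1 / ((k : ℝ) + 1) := by positivity
        linarith
    have hmono : Monotone fun k : ℕ => {x | sInf G + 1 / ((k : ℝ) + 1) < f x} := by
      intro a b hab x (hx : _ < f x)
      have : 1 / ((b : ℝ) + 1) ≤ 1 / ((a : ℝ) + 1) := Nat.one_div_le_one_div hab
      show _ < f x
      linarith
    rw [hU, hmono.measure_iUnion]
    refine iSup_le fun k => hup _ ?_
    have : 0 < 1 / ((k : ℝ) + 1) := by positivity
    linarith
  · have hU : {x | sInf G ≤ f x} = ⋂ k : ℕ, {x | sInf G - 1 / ((k : ℝ) + 1) < f x} := by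
      ext x
      simp only [Set.mem_ofPred_eq, Set.mem_iInter]
      constructor
      · intro hx k
        have : 0 < 1 / ((k : ℝ) + 1) := by positivity
        linarith
      · intro hk
        by_contra hlt
        push Not at hlt
        obtain ⟨k, hk'⟩ := exists_nat_one_div_lt (sub_pos.mpr hlt)
        have := hk k
        linarith
    have hmono : Antitone fun k : ℕ => {x | sInf G - 1 / ((k : ℝ) + 1) < f x} := by
      intro a b hab x (hx : _ < f x)
      have : 1 / ((b : ℝ) + 1) ≤ 1 / ((a : ℝ) + 1) := Nat.one_div_le_one_div hab
      show _ < f x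
      linarith
    rw [hU, hmono.measure_iInter (fun k => (measurableSet_lt measurable_const hf).nullMeasurableSet)
      ⟨0, measure_ne_top _ _⟩]
    refine le_iInf fun k => hdn _ ?_
    have : 0 < 1 / ((k : ℝ) + 1) := by positivity
    linarith

lemma exists_layer {n : ℕ} (hn : 2 ≤ n) (μ : Measure (EuclideanSpace ℝ (Fin n)))
    [IsFiniteMeasure μ] (hμ : μ ≪ volume)
    (f : EuclideanSpace ℝ (Fin n) → ℝ) (hf : Measurable f) (h0 : ∀ x, 0 ≤ f x)
    (C : ℝ) (hC : ∀ x, f x ≤ C) (m : ℝ≥0∞) (hm : m ≤ μ Set.univ) :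
    ∃ (T : Set (EuclideanSpace ℝ (Fin n))) (t : ℝ), MeasurableSet T ∧ μ T = m ∧
      (∀ x ∈ T, t ≤ f x) ∧ (∀ x ∉ T, f x ≤ t) := by
  obtain ⟨t, ht1, ht2⟩ := level_set μ f hf h0 C hC m hm
  have hLm : MeasurableSet {x | t < f x} := measurableSet_lt measurable_const hf
  have hEm : MeasurableSet {x | f x = t} := measurableSet_eq_fun hf measurable_const
  have hsplit : μ {x | t ≤ f x} = μ {x | t < f x} + μ {x | f x = t} := by
    rw [← measure_union _ hEm]
    · congr 1; ext x; simp only [Set.mem_ofPred_eq, Set.mem_union]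
      rw [le_iff_lt_or_eq, eq_comm (a := t)]
    · rw [Set.disjoint_left]; intro x (hx : t < f x) (hx' : f x = t); linarith
  let ν := μ.restrict {x | f x = t}
  let g : EuclideanSpace ℝ (Fin n) → ℝ := fun x => Real.exp (-‖x‖)
  have hgm : Measurable g := by fun_prop
  obtain ⟨s, hs1, hs2⟩ := level_set ν g hgm (fun x => (Real.exp_pos _).le) 1
    (fun x => Real.exp_le_one_iff.mpr (by simp)) (m - μ {x | t < f x}) (by
      simp only [ν, Measure.restrict_apply_univ]
      rw [tsub_le_iff_left, ← hsplit]; exact ht2)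
  have hsl : ν {x | s ≤ g x} = ν {x | s < g x} := by
    apply le_antisymm
    · have hz : ν {x | g x = s} = 0 := by
        have : Nonempty (Fin n) := ⟨⟨0, by omega⟩⟩
        have : {x | g x = s} ⊆ Metric.sphere 0 (- Real.log s) := by
          intro x (hx : g x = s)
          simp [← hx, g]
        have h0 : volume {x | g x = s} = 0 :=
          measure_mono_null this (Measure.addHaar_sphere volume _ _)
        exact le_antisymm ((Measure.restrict_le_self _).trans (hμ h0).le) bot_le
      calc ν {x | s ≤ g x} ≤ ν ({x | s < g x} ∪ {x | g x = s}) := by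
            apply measure_mono; intro x (hx : s ≤ g x)
            rcases hx.lt_or_eq with h | h
            · exact Or.inl h
            · exact Or.inr h.symm
        _ ≤ _ := (measure_union_le _ _).trans (by rw [hz, add_zero])
    · exact measure_mono fun x (hx : s < g x) => hx.le
  have hν : ν {x | s < g x} = m - μ {x | t < f x} := le_antisymm hs1 (hsl ▸ hs2)
  have hgs : MeasurableSet {x | s < g x} := measurableSet_lt measurable_const hgm
  rw [Measure.restrict_apply hgs] at hν
  refine ⟨{x | t < f x} ∪ ({x | s < g x} ∩ {x | f x = t}), t, hLm.union (hgs.inter hEm), ?_, ?_, ?_⟩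
  · rw [measure_union _ (hgs.inter hEm), hν, add_tsub_cancel_of_le ht1]
    rw [Set.disjoint_left]; rintro x (hx : t < f x) ⟨_, (hx' : f x = t)⟩; linarith
  · rintro x (hx | ⟨_, hx⟩)
    · exact le_of_lt hx
    · exact (show f x = t from hx).ge
  · intro x hx
    by_contra hlt
    exact hx (Or.inl (not_le.mp hlt))

/-- Bathtub principle. -/
lemma bathtub {n : ℕ} (hn : 2 ≤ n) (Ω : Set (EuclideanSpace ℝ (Fin n)))
    (hΩ : MeasurableSet Ω) (hV : volume Ω ≠ ⊤)
    (f : EuclideanSpace ℝ (Fin n) → ℝ) (hf : Measurable f) (h0 : ∀ x, 0 ≤ f x)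
    (C : ℝ) (hC : ∀ x, f x ≤ C) (A : ℝ) (hA0 : 0 ≤ A) (hA : A ≤ (volume Ω).toReal)
    (g : EuclideanSpace ℝ (Fin n) → ℝ) (hg : Measurable g)
    (hg01 : ∀ᵐ x ∂volume.restrict Ω, 0 ≤ g x ∧ g x ≤ 1)
    (hgi : ∫ x in Ω, g x = (volume Ω).toReal - A) :
    ∃ S : Set (EuclideanSpace ℝ (Fin n)), MeasurableSet S ∧ S ⊆ Ω ∧
      volume S = ENNReal.ofReal A ∧
      ∫ x in Ω, g x * f x ≤ (∫ x in Ω, f x) - ∫ x in S, f x := by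
  have : IsFiniteMeasure (volume.restrict Ω) := ⟨by simpa using hV.lt_top⟩
  obtain ⟨T, t, hTm, hT, hT1, hT2⟩ := exists_layer hn (volume.restrict Ω)
    (Measure.absolutelyContinuous_of_le Measure.restrict_le_self) f hf h0 C hC
    (volume Ω - ENNReal.ofReal A) (by simp)
  have hAV : ENNReal.ofReal A ≤ volume Ω := ENNReal.ofReal_le_of_le_toReal hA
  refine ⟨Ω \ T, hΩ.diff hTm, Set.sdiff_subset, ?_, ?_⟩
  · have h1 := measure_inter_add_sdiff (μ := volume) Ω hTm
    rw [Measure.restrict_apply hTm, Set.inter_comm] at hT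
    rw [hT] at h1
    have h2 : volume Ω - ENNReal.ofReal A + ENNReal.ofReal A = volume Ω := tsub_add_cancel_of_le hAV
    exact (ENNReal.add_right_inj (ne_top_of_le_ne_top hV tsub_le_self)).mp (h1.trans h2.symm)
  · have hfi : Integrable f (volume.restrict Ω) := by
      refine Integrable.of_bound hf.aestronglyMeasurable C (Filter.Eventually.of_forall fun x => ?_)
      rw [Real.norm_of_nonneg (h0 x)]; exact hC x
    have hgi' : Integrable g (volume.restrict Ω) := by
      refine Integrable.of_bound hg.aestronglyMeasurable 1 (hg01.mono fun x hx => ?_)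
      rw [Real.norm_of_nonneg hx.1]; exact hx.2
    have hgf : Integrable (fun x => g x * f x) (volume.restrict Ω) := by
      refine Integrable.of_bound (hg.mul hf).aestronglyMeasurable C (hg01.mono fun x hx => ?_)
      rw [Real.norm_of_nonneg (mul_nonneg hx.1 (h0 x))]
      have := mul_le_mul hx.2 (hC x) (h0 x) zero_le_one
      simpa using this
    have hsp : (∫ x in Ω ∩ T, f x) + ∫ x in Ω \ T, f x = ∫ x in Ω, f x :=
      integral_inter_add_sdiff hTm hfi
    have hTf : ∫ x in Ω ∩ T, f x = ∫ x in Ω, T.indicator f x := by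
      rw [integral_indicator hTm, Measure.restrict_restrict hTm, Set.inter_comm]
    have hT1i : ∫ x in Ω, T.indicator (fun _ => (1:ℝ)) x = (volume Ω).toReal - A := by
      rw [integral_indicator hTm]
      simp only [integral_const, smul_eq_mul, mul_one, Measure.real, Measure.restrict_apply_univ]
      rw [hT, ENNReal.toReal_sub_of_le hAV hV, ENNReal.toReal_ofReal hA0]
    have hint1 : Integrable (T.indicator f) (volume.restrict Ω) := hfi.indicator hTm
    have hint2 : Integrable (T.indicator (fun _ => (1:ℝ))) (volume.restrict Ω) :=
      (integrable_const (1:ℝ)).indicator hTm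
    have hkey : 0 ≤ ∫ x in Ω, ((T.indicator f x - g x * f x)
        - t * (T.indicator (fun _ => (1:ℝ)) x - g x)) := by
      refine integral_nonneg_of_ae (hg01.mono fun x hx => ?_)
      simp only [Pi.zero_apply]
      by_cases hxT : x ∈ T
      · simp only [Set.indicator_of_mem hxT]
        have := mul_nonneg (sub_nonneg.mpr hx.2) (sub_nonneg.mpr (hT1 x hxT))
        linarith
      · simp only [Set.indicator_of_notMem hxT]
        have := mul_nonneg hx.1 (sub_nonneg.mpr (hT2 x hxT))
        linarith
    have hi1 : Integrable (fun x => T.indicator f x - g x * f x) (volume.restrict Ω) :=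
      hint1.sub hgf
    have hi2 : Integrable (fun x => t * (T.indicator (fun _ => (1:ℝ)) x - g x))
      (volume.restrict Ω) := (hint2.sub hgi').const_mul t
    rw [integral_sub hi1 hi2, integral_const_mul,
      integral_sub hint1 hgf, integral_sub hint2 hgi', hT1i, hgi, ← hTf] at hkey
    linarith

lemma fixed_point (Q : Set (ℝ × ℝ × ℝ)) (l : ℝ) (hl : 0 < l)
    (hQ : ∀ D N s, (D, N, s) ∈ Q → 0 < N ∧ 0 ≤ s ∧ s ≤ N ∧ l * N ≤ D)
    (hne : ∃ D N s, (D, N, s) ∈ Q ∧ s < N) (F : ℝ → ℝ)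
    (hF : ∀ a, F a = sInf {r : ℝ | ∃ D N s, (D, N, s) ∈ Q ∧ r = (D + a * s) / N}) :
    ∃ abar : ℝ, (0 < abar ∧ F abar = abar) ∧ (∀ a, 0 < a → F a = a → a = abar) ∧
      (∀ D N s, (D, N, s) ∈ Q → abar * (N - s) ≤ D) ∧
      (∀ b, (∀ D N s, (D, N, s) ∈ Q → b * (N - s) ≤ D) → b ≤ abar) := by
  obtain ⟨D0, N0, s0, h0, hs0⟩ := hne
  -- lower and upper bounds for `F`
  have hlow : ∀ a c, (∀ D N s, (D, N, s) ∈ Q → c * N ≤ D + a * s) → c ≤ F a := by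
    intro a c hc
    rw [hF]
    refine le_csInf ⟨_, D0, N0, s0, h0, rfl⟩ ?_
    rintro r ⟨D, N, s, hm, rfl⟩
    rw [le_div_iff₀ (hQ D N s hm).1]
    exact hc D N s hm
  have hupp : ∀ a, 0 ≤ a → ∀ D N s, (D, N, s) ∈ Q → F a * N ≤ D + a * s := by
    intro a ha D N s hm
    rw [← le_div_iff₀ (hQ D N s hm).1, hF]
    refine csInf_le ⟨0, ?_⟩ ⟨D, N, s, hm, rfl⟩
    rintro r ⟨D, N, s, hm, rfl⟩
    obtain ⟨h1, h2, h3, h4⟩ := hQ D N s hm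
    have : 0 ≤ l * N := by positivity
    exact div_nonneg (by nlinarith [mul_nonneg ha h2]) h1.le
  let G : Set ℝ := {r | ∃ D N s, (D, N, s) ∈ Q ∧ s < N ∧ r = D / (N - s)}
  have hGne : G.Nonempty := ⟨_, D0, N0, s0, h0, hs0, rfl⟩
  have hGlow : ∀ b, (∀ D N s, (D, N, s) ∈ Q → b * (N - s) ≤ D) → b ∈ lowerBounds G := by
    rintro b hb r ⟨D, N, s, hm, hs, rfl⟩
    rw [le_div_iff₀ (sub_pos.mpr hs)]
    exact hb D N s hm
  have hl' : ∀ D N s, (D, N, s) ∈ Q → l * (N - s) ≤ D := by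
    intro D N s hm
    obtain ⟨h1, h2, h3, h4⟩ := hQ D N s hm
    nlinarith [mul_nonneg hl.le h2]
  have hGb : BddBelow G := ⟨l, hGlow l hl'⟩
  have hle : ∀ b, (∀ D N s, (D, N, s) ∈ Q → b * (N - s) ≤ D) → b ≤ sInf G :=
    fun b hb => le_csInf hGne (hGlow b hb)
  have hpos : 0 < sInf G := hl.trans_le (hle l hl')
  have hD : ∀ D N s, (D, N, s) ∈ Q → sInf G * (N - s) ≤ D := by
    intro D N s hm
    obtain ⟨h1, h2, h3, h4⟩ := hQ D N s hm
    rcases h3.lt_or_eq with hlt | heq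
    · rw [← le_div_iff₀ (sub_pos.mpr hlt)]
      exact csInf_le hGb ⟨D, N, s, hm, hlt, rfl⟩
    · rw [heq]
      have : 0 ≤ l * N := by positivity
      simp; linarith
  refine ⟨sInf G, ⟨hpos, le_antisymm ?_ ?_⟩, ?_, hD, hle⟩
  · refine le_of_forall_pos_le_add fun ε hε => ?_
    obtain ⟨r, ⟨D, N, s, hm, hs, rfl⟩, hr⟩ := exists_lt_of_csInf_lt hGne
      (show sInf G < sInf G + ε by linarith)
    rw [div_lt_iff₀ (sub_pos.mpr hs)] at hr
    obtain ⟨h1, h2, h3, h4⟩ := hQ D N s hm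
    have := hupp (sInf G) hpos.le D N s hm
    have h5 := mul_nonneg hε.le h2
    refine le_of_mul_le_mul_right ?_ h1
    nlinarith
  · refine hlow _ _ fun D N s hm => ?_
    have := hD D N s hm
    linarith
  · intro a ha hFa
    have h1 : a ≤ sInf G := hle a fun D N s hm => by
      have := hupp a ha.le D N s hm
      rw [hFa] at this
      linarith
    rcases h1.lt_or_eq with hlt | heq
    · exfalso
      set θ := a / sInf G with hθ
      have hθ1 : θ < 1 := (div_lt_one hpos).mpr hlt
      have hθ0 : 0 < θ := div_pos ha hpos
      have hθe : θ * sInf G = a := by rw [hθ]; field_simp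
      have : a + (1 - θ) * l ≤ F a := hlow _ _ fun D N s hm => by
        have e1 := mul_le_mul_of_nonneg_left (hD D N s hm) hθ0.le
        have e2 := mul_le_mul_of_nonneg_left (hQ D N s hm).2.2.2 (sub_pos.mpr hθ1).le
        rw [← mul_assoc, hθe] at e1
        nlinarith
      rw [hFa] at this
      have := mul_pos (sub_pos.mpr hθ1) hl
      linarith
    · exact heq

/-- Basic facts on test functions. -/
lemma test_facts {n : ℕ} (Ω : Set (EuclideanSpace ℝ (Fin n)))
    (u : EuclideanSpace ℝ (Fin n) → ℝ) (hu : TestFun Ω u) :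
    Continuous u ∧ Integrable (fun x => u x ^ 2) ∧ (∃ C, ∀ x, u x ^ 2 ≤ C) ∧
    0 < ∫ x in Ω, u x ^ 2 ∧ (∫ x in Ω, u x ^ 2) = ∫ x, u x ^ 2 ∧
    (∫ x in Ω, lap u x ^ 2) = ∫ x, lap u x ^ 2 := by
  obtain ⟨hsm, hcs, hsup, hne⟩ := hu
  have hc := hsm.continuous
  have hcs2 : HasCompactSupport (fun x => u x ^ 2) :=
    hcs.comp_left (g := fun y : ℝ => y ^ 2) (by norm_num)
  have hc2 : Continuous (fun x => u x ^ 2) := by fun_prop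
  have hz : ∀ x, x ∉ Ω → u =ᶠ[nhds x] 0 := fun x hx =>
    notMem_tsupport_iff_eventuallyEq.mp fun hx' => hx (hsup hx')
  have hN : (∫ x in Ω, u x ^ 2) = ∫ x, u x ^ 2 := by
    refine setIntegral_eq_integral_of_forall_compl_eq_zero fun x hx => ?_
    rw [(hz x hx).eq_of_nhds]; simp
  refine ⟨hc, int_cs hc2 hcs2, ?_, ?_, hN, ?_⟩
  · obtain ⟨C, hC⟩ := hcs2.exists_bound_of_continuous hc2
    exact ⟨C, fun x => (Real.le_norm_self _).trans (hC x)⟩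
  · rw [hN]
    obtain ⟨x, hx⟩ := Function.ne_iff.mp hne
    refine hc2.integral_pos_of_hasCompactSupport_nonneg_nonzero hcs2 (fun x => sq_nonneg _)
      (x := x) ?_
    exact pow_ne_zero 2 hx
  · refine setIntegral_eq_integral_of_forall_compl_eq_zero fun x hx => ?_
    unfold lap
    rw [((hz x hx).iteratedFDeriv ℝ 2).eq_of_nhds]
    have : (iteratedFDeriv ℝ 2 (0 : EuclideanSpace ℝ (Fin n) → ℝ) x) = 0 := by
      simp
    simp [this]

/-- With `Θ := Θ(h,H,M)`, `α := (H−h)Θ` and `A := (H|Ω|−M)/(H−h)`, if `A < |Ω|` then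
`0 < α ≤ ᾱ(A)` where `ᾱ(A)` is the unique positive fixed point of `Λ(·,A)`;
moreover `α = ᾱ(A)` if and only if `h = 0`. -/
theorem statement17 {n : ℕ} (hn : 2 ≤ n) (Ω : Set (EuclideanSpace ℝ (Fin n)))
    (hne : Ω.Nonempty) (hΩo : IsOpen Ω) (hΩb : Bornology.IsBounded Ω)
    (h H M : ℝ) (hh : 0 ≤ h) (hH : h < H)
    (hM1 : h * (volume Ω).toReal ≤ M) (hM2 : M ≤ H * (volume Ω).toReal)
    (Θ α A : ℝ) (hΘ : Θ = Theta Ω h H M) (hα : α = (H - h) * Θ)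
    (hA : A = (H * (volume Ω).toReal - M) / (H - h)) (hA1 : A < (volume Ω).toReal) :
    ∃ abar : ℝ, (0 < abar ∧ Lam Ω abar A = abar) ∧
      (∀ a : ℝ, 0 < a → Lam Ω a A = a → a = abar) ∧
      0 < α ∧ α ≤ abar ∧ (α = abar ↔ h = 0) := by
  have hΩm : MeasurableSet Ω := hΩo.measurableSet
  have hVt : volume Ω ≠ ⊤ := hΩb.measure_lt_top.ne
  have hVp : 0 < (volume Ω).toReal :=
    ENNReal.toReal_pos (hΩo.measure_pos volume hne).ne' hVt
  have hfin : IsFiniteMeasure (volume.restrict Ω) := ⟨by simpa using hVt.lt_top⟩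
  set V := (volume Ω).toReal with hVdef
  have hHh : 0 < H - h := sub_pos.mpr hH
  have hHp : 0 < H := hh.trans_lt hH
  have hMA : M = H * V - (H - h) * A := by rw [hA]; field_simp; ring
  have hA0 : 0 ≤ A := by rw [hA]; exact div_nonneg (by linarith) hHh.le
  have hMh : h * V < M := by nlinarith
  have hMp : 0 < M := (mul_nonneg hh hVp.le).trans_lt hMh
  obtain ⟨R, hRp, hR⟩ : ∃ R : ℝ, 0 < R ∧ ∀ x ∈ Ω, ‖x‖ ≤ R := hΩb.exists_pos_norm_le
  set c : ℝ := 16 * R ^ 4 with hc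
  have hcp : 0 < c := by positivity
  have hpoin : ∀ u, TestFun Ω u → (∫ x in Ω, u x ^ 2) ≤ c * ∫ x in Ω, lap u x ^ 2 := by
    intro u hu
    obtain ⟨-, -, -, -, h1, h2⟩ := test_facts Ω u hu
    rw [h1, h2]
    exact poincare hn Ω R hRp hR u hu
  obtain ⟨u₀, hu₀⟩ : ∃ u, TestFun Ω u := by
    obtain ⟨x, hx⟩ := hne
    obtain ⟨f, h1, h2, h3, -, h5⟩ := exists_contDiff_tsupport_subset (n := ⊤) (hΩo.mem_nhds hx)
    exact ⟨f, h3, h2, h1, fun h0 => by simp [h0] at h5⟩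
  -- integrability against bounded densities
  have hint : ∀ u, TestFun Ω u → ∀ ρ : EuclideanSpace ℝ (Fin n) → ℝ, Admissible Ω h H M ρ →
      Integrable (fun x => ρ x * u x ^ 2) (volume.restrict Ω) := by
    intro u hu ρ hρ
    obtain ⟨-, hi, -⟩ := test_facts Ω u hu
    refine hi.integrableOn.bdd_mul (c := H) hρ.1.aestronglyMeasurable (hρ.2.1.mono fun x hx => ?_)
    rw [Real.norm_of_nonneg hx.2.2.le]; exact hx.2.1
  have hPpos : ∀ u, TestFun Ω u → ∀ ρ : EuclideanSpace ℝ (Fin n) → ℝ, Admissible Ω h H M ρ →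
      0 < ∫ x in Ω, ρ x * u x ^ 2 := by
    intro u hu ρ hρ
    obtain ⟨-, hi, -, hN, -⟩ := test_facts Ω u hu
    have hnn : 0 ≤ᵐ[volume.restrict Ω] fun x => ρ x * u x ^ 2 :=
      hρ.2.1.mono fun x hx => mul_nonneg hx.2.2.le (sq_nonneg _)
    refine lt_of_le_of_ne (integral_nonneg_of_ae hnn) fun h0 => ?_
    have hz := (integral_eq_zero_iff_of_nonneg_ae hnn (hint u hu ρ hρ)).mp h0.symm
    have : ∫ x in Ω, u x ^ 2 = 0 := by
      refine integral_eq_zero_of_ae ?_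
      filter_upwards [hz, hρ.2.1] with x h1 h2
      rcases mul_eq_zero.mp h1 with h3 | h3
      · exact absurd h3 h2.2.2.ne'
      · exact h3
    linarith
  have hPle : ∀ u, TestFun Ω u → ∀ ρ : EuclideanSpace ℝ (Fin n) → ℝ, Admissible Ω h H M ρ →
      ∫ x in Ω, ρ x * u x ^ 2 ≤ H * ∫ x in Ω, u x ^ 2 := by
    intro u hu ρ hρ
    obtain ⟨-, hi, -⟩ := test_facts Ω u hu
    rw [← integral_const_mul]
    exact integral_mono_ae (hint u hu ρ hρ) (hi.integrableOn.const_mul H)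
      (hρ.2.1.mono fun x hx => mul_le_mul_of_nonneg_right hx.2.1 (sq_nonneg _))
  -- the constant density
  have hMV1 : h ≤ M / V := by rw [le_div_iff₀ hVp]; exact hM1
  have hMV2 : M / V ≤ H := by rw [div_le_iff₀ hVp]; exact hM2
  have hMV0 : 0 < M / V := div_pos hMp hVp
  have hconst : Admissible Ω h H M (fun _ => M / V) := by
    refine ⟨measurable_const, Filter.Eventually.of_forall fun x => ⟨hMV1, hMV2, hMV0⟩, ?_⟩
    simp only [integral_const, smul_eq_mul, Measure.real, Measure.restrict_apply_univ]
    rw [← hVdef]; field_simp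
  -- bounds for Theta
  have hlow : ∀ b, (∀ u, TestFun Ω u → ∀ ρ : EuclideanSpace ℝ (Fin n) → ℝ,
      Admissible Ω h H M ρ → b * (∫ x in Ω, ρ x * u x ^ 2) ≤ ∫ x in Ω, lap u x ^ 2) → b ≤ Θ := by
    intro b hb
    rw [hΘ]
    refine le_csInf ⟨_, _, hconst, u₀, hu₀, rfl⟩ ?_
    rintro r ⟨ρ, hρ, u, hu, rfl⟩
    rw [le_div_iff₀ (hPpos u hu ρ hρ)]
    exact hb u hu ρ hρ
  have hΘpos : 0 < Θ := by
    have : 1 / (H * c) ≤ Θ := hlow _ fun u hu ρ hρ => by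
      have h1 := hPle u hu ρ hρ
      have h2 := mul_le_mul_of_nonneg_left (hpoin u hu) hHp.le
      rw [div_mul_eq_mul_div, one_mul, div_le_iff₀ (by positivity)]
      linarith
    exact lt_of_lt_of_le (by positivity) this
  have hupp : ∀ u, TestFun Ω u → ∀ ρ : EuclideanSpace ℝ (Fin n) → ℝ,
      Admissible Ω h H M ρ → Θ * (∫ x in Ω, ρ x * u x ^ 2) ≤ ∫ x in Ω, lap u x ^ 2 := by
    intro u hu ρ hρ
    rw [← le_div_iff₀ (hPpos u hu ρ hρ), hΘ]
    refine csInf_le ⟨0, ?_⟩ ⟨ρ, hρ, u, hu, rfl⟩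
    rintro r ⟨ρ, hρ, u, hu, rfl⟩
    exact div_nonneg (integral_nonneg fun x => sq_nonneg _) (hPpos u hu ρ hρ).le
  -- the inequality for characteristic densities
  have hchar : ∀ u, TestFun Ω u → ∀ S, MeasurableSet S → S ⊆ Ω → volume S = ENNReal.ofReal A →
      Θ * (H * (∫ x in Ω, u x ^ 2) - (H - h) * ∫ x in S, u x ^ 2) ≤ ∫ x in Ω, lap u x ^ 2 := by
    intro u hu S hS hSΩ hSA
    obtain ⟨-, hi, -⟩ := test_facts Ω u hu
    set N := ∫ x in Ω, u x ^ 2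
    set s := ∫ x in S, u x ^ 2 with hs
    have hind : ∀ φ : EuclideanSpace ℝ (Fin n) → ℝ,
        ∫ x in Ω, S.indicator φ x = ∫ x in S, φ x := by
      intro φ
      rw [integral_indicator hS, Measure.restrict_restrict hS, Set.inter_eq_left.mpr hSΩ]
    have hε : ∀ ε : ℝ, 0 < ε → ε ≤ 1 →
        Θ * ((1 - ε) * (H * N - (H - h) * s) + ε * (M / V * N)) ≤ ∫ x in Ω, lap u x ^ 2 := by
      intro ε hε0 hε1
      let χ : EuclideanSpace ℝ (Fin n) → ℝ := S.indicator (fun _ => (1:ℝ))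
      have hχm : Measurable χ := measurable_const.indicator hS
      have hχi : Integrable χ (volume.restrict Ω) := (integrable_const (1:ℝ)).indicator hS
      let ρ : EuclideanSpace ℝ (Fin n) → ℝ := fun x =>
        ((1 - ε) * H + ε * (M / V)) - ((1 - ε) * (H - h)) * χ x
      have hρ : Admissible Ω h H M ρ := by
        refine ⟨measurable_const.sub (hχm.const_mul _), Filter.Eventually.of_forall fun x => ?_, ?_⟩
        · have hχ : χ x = 0 ∨ χ x = 1 := by
            by_cases hx : x ∈ S
            · right; exact Set.indicator_of_mem hx _
            · left; exact Set.indicator_of_notMem hx _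
          have e1 := mul_le_mul_of_nonneg_left hMV1 hε0.le
          have e2 := mul_le_mul_of_nonneg_left hMV2 hε0.le
          have e3 := mul_pos hε0 hMV0
          have e4 := mul_nonneg (sub_nonneg.mpr hε1) hh
          have e5 := mul_nonneg (sub_nonneg.mpr hε1) hHh.le
          rcases hχ with h0 | h0 <;> simp only [ρ, h0] <;> refine ⟨?_, ?_, ?_⟩ <;> nlinarith
        · have hχI : ∫ x in Ω, χ x = A := by
            rw [hind]
            simp only [integral_const, smul_eq_mul, mul_one, Measure.real,
              Measure.restrict_apply_univ]
            rw [hSA, ENNReal.toReal_ofReal hA0]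
          simp only [ρ]
          rw [integral_sub (integrable_const _) (hχi.const_mul _), integral_const_mul, hχI]
          simp only [integral_const, smul_eq_mul, Measure.real, Measure.restrict_apply_univ]
          rw [← hVdef]
          have : V * (ε * (M / V)) = ε * M := by field_simp
          rw [mul_add, this]
          rw [hMA]; ring
      have key := hupp u hu ρ hρ
      have hval : ∫ x in Ω, ρ x * u x ^ 2 =
          (1 - ε) * (H * N - (H - h) * s) + ε * (M / V * N) := by
        have e : ∀ x, ρ x * u x ^ 2 = ((1 - ε) * H + ε * (M / V)) * u x ^ 2 -
            ((1 - ε) * (H - h)) * S.indicator (fun x => u x ^ 2) x := by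
          intro x
          by_cases hx : x ∈ S
          · simp only [ρ, χ, Set.indicator_of_mem hx]; ring
          · simp only [ρ, χ, Set.indicator_of_notMem hx]; ring
        simp only [e]
        rw [integral_sub (hi.integrableOn.const_mul _)
          ((hi.integrableOn.indicator hS).const_mul _), integral_const_mul, integral_const_mul,
          hind]
        ring
      rw [hval] at key
      exact key
    have hcont : Continuous fun ε : ℝ =>
        Θ * ((1 - ε) * (H * N - (H - h) * s) + ε * (M / V * N)) := by fun_prop
    have htend : Filter.Tendsto (fun ε : ℝ =>
        Θ * ((1 - ε) * (H * N - (H - h) * s) + ε * (M / V * N)))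
        (nhdsWithin 0 (Set.Ioi 0)) (nhds (Θ * (H * N - (H - h) * s))) := by
      have := (hcont.tendsto 0).mono_left (nhdsWithin_le_nhds (s := Set.Ioi 0))
      simpa using this
    refine le_of_tendsto htend ?_
    filter_upwards [Ioc_mem_nhdsGT (zero_lt_one (α := ℝ))] with ε hεm
    exact hε ε hεm.1 hεm.2
  -- the abstract fixed point
  let Q : Set (ℝ × ℝ × ℝ) := {p | ∃ S : Set (EuclideanSpace ℝ (Fin n)), MeasurableSet S ∧ S ⊆ Ω ∧
      volume S = ENNReal.ofReal A ∧ ∃ u : EuclideanSpace ℝ (Fin n) → ℝ, TestFun Ω u ∧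
        p = (∫ x in Ω, lap u x ^ 2, ∫ x in Ω, u x ^ 2, ∫ x in S, u x ^ 2)}
  obtain ⟨abar, hab1, hab2, hab3, hab4⟩ := fixed_point Q (1 / c) (by positivity) (by
      rintro D N s ⟨S, hS, hSΩ, hSA, u, hu, he⟩
      simp only [Prod.mk.injEq] at he
      obtain ⟨rfl, rfl, rfl⟩ := he
      obtain ⟨-, hi, -, hN, -⟩ := test_facts Ω u hu
      refine ⟨hN, integral_nonneg fun x => sq_nonneg _, ?_, ?_⟩
      · exact setIntegral_mono_set hi.integrableOn
          (Filter.Eventually.of_forall fun x => sq_nonneg _) hSΩ.eventuallyLE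
      · rw [div_mul_eq_mul_div, one_mul, div_le_iff₀ hcp, mul_comm]
        exact hpoin u hu) (by
      obtain ⟨huc, hi, ⟨C, hC⟩, hN, -⟩ := test_facts Ω u₀ hu₀
      have hr0 : 0 < (V - A) / V := div_pos (by linarith) hVp
      obtain ⟨S, hS, hSΩ, hSA, hSle⟩ := bathtub hn Ω hΩm hVt (fun x => u₀ x ^ 2)
        (huc.pow 2).measurable (fun x => sq_nonneg _) C hC A hA0 hA1.le (fun _ => (V - A) / V)
        measurable_const (Filter.Eventually.of_forall fun x => ⟨hr0.le, by
          rw [div_le_one hVp]; linarith⟩) (by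
          simp only [integral_const, smul_eq_mul, Measure.real, Measure.restrict_apply_univ]
          rw [← hVdef]; field_simp)
      refine ⟨_, _, _, ⟨S, hS, hSΩ, hSA, u₀, hu₀, rfl⟩, ?_⟩
      rw [integral_const_mul] at hSle
      have := mul_pos hr0 hN
      linarith) (fun a => Lam Ω a A) (by
      intro a
      unfold Lam
      congr 1
      ext r
      constructor
      · rintro ⟨S, hS, hSΩ, hSA, u, hu, rfl⟩
        exact ⟨_, _, _, ⟨S, hS, hSΩ, hSA, u, hu, rfl⟩, rfl⟩
      · rintro ⟨D, N, s, ⟨S, hS, hSΩ, hSA, u, hu, he⟩, rfl⟩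
        simp only [Prod.mk.injEq] at he
        obtain ⟨rfl, rfl, rfl⟩ := he
        exact ⟨S, hS, hSΩ, hSA, u, hu, rfl⟩)
  have hαab : α + Θ * h ≤ abar := by
    refine hab4 _ ?_
    rintro D N s ⟨S, hS, hSΩ, hSA, u, hu, he⟩
    simp only [Prod.mk.injEq] at he
    obtain ⟨rfl, rfl, rfl⟩ := he
    have h1 := hchar u hu S hS hSΩ hSA
    have h2 : 0 ≤ ∫ x in S, u x ^ 2 := integral_nonneg fun x => sq_nonneg _
    have h3 := mul_nonneg (mul_nonneg hΘpos.le hh) h2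
    rw [hα]
    nlinarith
  have hΘh : 0 ≤ Θ * h := mul_nonneg hΘpos.le hh
  refine ⟨abar, hab1, hab2, ?_, by linarith, ?_, ?_⟩
  · rw [hα]; exact mul_pos hHh hΘpos
  · intro he
    rcases hh.lt_or_eq with hlt | heq
    · have := mul_pos hΘpos hlt
      linarith
    · exact heq.symm
  · intro h0
    refine le_antisymm (by linarith) ?_
    have hb : abar / H ≤ Θ := hlow _ fun u hu ρ hρ => by
      obtain ⟨huc, hi, ⟨C, hC⟩, hN, -⟩ := test_facts Ω u hu
      obtain ⟨S, hS, hSΩ, hSA, hSle⟩ := bathtub hn Ω hΩm hVt (fun x => u x ^ 2)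
        (huc.pow 2).measurable (fun x => sq_nonneg _) C hC A hA0 hA1.le (fun x => H⁻¹ * ρ x)
        (hρ.1.const_mul _) (hρ.2.1.mono fun x hx => ⟨by
          have := hx.2.2
          positivity, by
          rw [inv_mul_le_iff₀ hHp, mul_one]; exact hx.2.1⟩) (by
          rw [integral_const_mul, hρ.2.2, hMA, h0]; field_simp; ring)
      have h1 := hab3 _ _ _ ⟨S, hS, hSΩ, hSA, u, hu, rfl⟩
      have h2 := mul_le_mul_of_nonneg_left hSle hab1.1.le
      simp only [mul_assoc] at h2
      rw [integral_const_mul] at h2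
      calc abar / H * ∫ x in Ω, ρ x * u x ^ 2 = abar * (H⁻¹ * ∫ x in Ω, ρ x * u x ^ 2) := by
            rw [div_eq_mul_inv]; ring
        _ ≤ _ := h2
        _ ≤ _ := h1
    rw [div_le_iff₀ hHp] at hb
    rw [hα, h0]
    linarith
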